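/- arXiv:0809.3554 — 9 statements merged into one kernel-verified Lean document; each statement's English description precedes it below -/
import Mathlib

section
/- The achievable region equals the outer bound: C̲ = C̄. (This is the algebraic content of the capacity theorem for the deterministic many-to-one interference channel: the Minkowski sum of the per-level regions and the interference-free region coincides exactly with the polytope cut out by the individual rate constraints and the 2^K − 1 sum-rate constraints.) -/
open Finset Pointwise

/-- The set `U_k` of users (indices `i ≠ 0`) potentially causing interference at
receiver 0 on level `k`:  `n_{0i} - n_{ii} < k ≤ n_{0i}`.  Here `nd i = n_{ii}` are the
direct gains and `nc i = n_{0i}` are the cross gains. -/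
def Uset (K : ℕ) (nd nc : Fin (K + 1) → ℕ) (k : ℕ) : Finset (Fin (K + 1)) :=
  Finset.univ.filter fun i => i ≠ 0 ∧ (nc i : ℤ) - (nd i : ℤ) < (k : ℤ) ∧ (k : ℤ) ≤ (nc i : ℤ)

/-- `f_free(i) = (n_{ii} - n_{0i})⁺ + (n_{0i} - n_{00})⁺` (truncated subtraction on ℕ). -/
def ffree (K : ℕ) (nd nc : Fin (K + 1) → ℕ) (i : Fin (K + 1)) : ℕ :=
  (nd i - nc i) + (nc i - nd 0)

/-- The right-hand side of the sum-rate constraint on `S ∪ {0}`: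
`f_free(S) + ∑_{k=1}^{n_{00}} f_k(S)` where `f_k(S) = max(|U_k ∩ S|, 1)`. -/
def sumBound (K : ℕ) (nd nc : Fin (K + 1) → ℕ) (S : Finset (Fin (K + 1))) : ℕ :=
  (∑ i ∈ S, ffree K nd nc i) +
    ∑ k ∈ Finset.Icc 1 (nd 0), max ((Uset K nd nc k ∩ S).card) 1

/-- The outer-bound polytope `C̄`. -/
def outerRegion (K : ℕ) (nd nc : Fin (K + 1) → ℕ) : Set (Fin (K + 1) → ℝ) :=
  {r | (∀ i, 0 ≤ r i ∧ r i ≤ (nd i : ℝ)) ∧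
    ∀ S : Finset (Fin (K + 1)), 0 ∉ S → S.Nonempty →
      r 0 + ∑ i ∈ S, r i ≤ (sumBound K nd nc S : ℝ)}

/-- The interference-free region `C_free`. -/
def Cfree (K : ℕ) (nd nc : Fin (K + 1) → ℕ) : Set (Fin (K + 1) → ℝ) :=
  {r | r 0 = 0 ∧ ∀ i, i ≠ 0 → 0 ≤ r i ∧ r i ≤ (ffree K nd nc i : ℝ)}

/-- The single-level region `C_k`. -/
def Clevel (K : ℕ) (nd nc : Fin (K + 1) → ℕ) (k : ℕ) : Set (Fin (K + 1) → ℝ) :=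
  {r | 0 ≤ r 0 ∧ r 0 ≤ 1 ∧
    (∀ i ∈ Uset K nd nc k, 0 ≤ r i ∧ r i ≤ 1 ∧ r 0 + r i ≤ 1) ∧
    (∀ i, i ≠ 0 → i ∉ Uset K nd nc k → r i = 0)}

/-- The achievable region `C̲ = C_free + ∑_{k=1}^{n_{00}} C_k` (Minkowski sum of sets). -/
def achievableRegion (K : ℕ) (nd nc : Fin (K + 1) → ℕ) : Set (Fin (K + 1) → ℝ) :=
  Cfree K nd nc + ∑ k ∈ Finset.Icc 1 (nd 0), Clevel K nd nc k

/-- Levels (within receiver 0) at which user `i` interferes form an interval. -/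
lemma mem_U_iff (K : ℕ) (nd nc : Fin (K + 1) → ℕ) (i : Fin (K + 1)) (hi : i ≠ 0) (k : ℕ)
    (hk : 1 ≤ k) : i ∈ Uset K nd nc k ↔ nc i - nd i < k ∧ k ≤ nc i := by
  unfold Uset
  simp only [Finset.mem_filter, Finset.mem_univ, true_and]
  constructor
  · rintro ⟨_, h1, h2⟩
    constructor <;> omega
  · rintro ⟨h1, h2⟩
    refine ⟨hi, ?_, ?_⟩ <;> omega

lemma levels_eq (K : ℕ) (nd nc : Fin (K + 1) → ℕ) (i : Fin (K + 1)) (hi : i ≠ 0) :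
    (Finset.Icc 1 (nd 0)).filter (fun k => i ∈ Uset K nd nc k)
      = Finset.Ioc (nc i - nd i) (min (nc i) (nd 0)) := by
  ext k
  simp only [Finset.mem_filter, Finset.mem_Icc, Finset.mem_Ioc, le_min_iff]
  constructor
  · rintro ⟨⟨h1, h2⟩, h3⟩
    rw [mem_U_iff K nd nc i hi k h1] at h3
    omega
  · rintro ⟨h1, h2⟩
    have h1' : 1 ≤ k := by omega
    rw [mem_U_iff K nd nc i hi k h1']
    omega

lemma ffree_add_card (K : ℕ) (nd nc : Fin (K + 1) → ℕ) (i : Fin (K + 1)) (hi : i ≠ 0)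
    (hreg : nc i ≤ nd 0 + nd i) :
    ffree K nd nc i + ((Finset.Icc 1 (nd 0)).filter (fun k => i ∈ Uset K nd nc k)).card
      = nd i := by
  rw [levels_eq K nd nc i hi, Nat.card_Ioc]
  unfold ffree
  omega

/-- Number of levels up to `m` not touched by `S`. -/
def unc (K : ℕ) (nd nc : Fin (K + 1) → ℕ) (S : Finset (Fin (K + 1))) (m : ℕ) : ℕ :=
  ((Finset.Icc 1 m).filter (fun k => Uset K nd nc k ∩ S = ∅)).card

lemma sumBound_eq (K : ℕ) (nd nc : Fin (K + 1) → ℕ)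
    (hreg : ∀ i : Fin (K + 1), i ≠ 0 → nc i ≤ nd 0 + nd i)
    (S : Finset (Fin (K + 1))) (h0 : 0 ∉ S) :
    sumBound K nd nc S = ∑ i ∈ S, nd i + unc K nd nc S (nd 0) := by
  have h1 : ∀ k, max ((Uset K nd nc k ∩ S).card) 1
      = (∑ i ∈ S, if i ∈ Uset K nd nc k then 1 else 0)
        + if Uset K nd nc k ∩ S = ∅ then 1 else 0 := by
    intro k
    have : (∑ i ∈ S, if i ∈ Uset K nd nc k then 1 else 0) = (Uset K nd nc k ∩ S).card := by
      rw [← Finset.card_filter, Finset.filter_mem_eq_inter, Finset.inter_comm]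
    rw [this]
    split_ifs with h
    · simp [h]
    · have : 0 < (Uset K nd nc k ∩ S).card :=
        Finset.card_pos.mpr (Finset.nonempty_iff_ne_empty.mpr h)
      omega
  unfold sumBound unc
  simp_rw [h1]
  rw [Finset.sum_add_distrib, Finset.sum_comm, ← Finset.card_filter, ← add_assoc,
    ← Finset.sum_add_distrib]
  congr 1
  refine Finset.sum_congr rfl fun i hi => ?_
  have hi0 : i ≠ 0 := fun h => h0 (h ▸ hi)
  rw [← Finset.card_filter]
  exact ffree_add_card K nd nc i hi0 (hreg i hi0)

lemma tele (D : ℕ → ℝ) (a b : ℕ) (h : a ≤ b) :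
    ∑ k ∈ Finset.Ioc a b, (D k - D (k - 1)) = D b - D a := by
  induction b, h using Nat.le_induction with
  | base => simp
  | succ b hb ih =>
    rw [Finset.sum_Ioc_succ_top (by omega), ih]
    simp

/-- The dual value: a shortest-path type potential. -/
noncomputable def dual (K : ℕ) (nd nc : Fin (K + 1) → ℕ) (d : Fin (K + 1) → ℝ) (m : ℕ) : ℝ :=
  (Finset.univ.erase (0 : Fin (K + 1))).powerset.inf' ⟨∅, by simp⟩
    (fun S => ∑ i ∈ S, d i + (unc K nd nc S m : ℝ))

lemma dual_le (K : ℕ) (nd nc : Fin (K + 1) → ℕ) (d : Fin (K + 1) → ℝ) (m : ℕ)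
    (S : Finset (Fin (K + 1))) (h0 : 0 ∉ S) :
    dual K nd nc d m ≤ ∑ i ∈ S, d i + (unc K nd nc S m : ℝ) := by
  unfold dual
  exact Finset.inf'_le (f := fun S => ∑ i ∈ S, d i + (unc K nd nc S m : ℝ))
    (by simp [Finset.subset_erase, h0])

lemma dual_exists (K : ℕ) (nd nc : Fin (K + 1) → ℕ) (d : Fin (K + 1) → ℝ) (m : ℕ) :
    ∃ S : Finset (Fin (K + 1)), 0 ∉ S ∧
      dual K nd nc d m = ∑ i ∈ S, d i + (unc K nd nc S m : ℝ) := by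
  obtain ⟨S, hS, h⟩ := Finset.exists_mem_eq_inf'
    (s := (Finset.univ.erase (0 : Fin (K + 1))).powerset) ⟨∅, by simp⟩
    (fun S => ∑ i ∈ S, d i + (unc K nd nc S m : ℝ))
  refine ⟨S, ?_, h⟩
  simpa [Finset.subset_erase] using hS

lemma exists_levels (K : ℕ) (nd nc : Fin (K + 1) → ℕ)
    (hreg : ∀ i : Fin (K + 1), i ≠ 0 → nc i ≤ nd 0 + nd i)
    (d : Fin (K + 1) → ℝ) (hd : ∀ i, 0 ≤ d i) (r : ℝ) (hr : 0 ≤ r)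
    (h : ∀ S : Finset (Fin (K + 1)), 0 ∉ S → r ≤ ∑ i ∈ S, d i + (unc K nd nc S (nd 0) : ℝ)) :
    ∃ x : ℕ → ℝ, (∀ k, 1 ≤ k → 0 ≤ x k ∧ x k ≤ 1) ∧ ∑ k ∈ Finset.Icc 1 (nd 0), x k = r ∧
      ∀ i, i ≠ 0 →
        ∑ k ∈ (Finset.Icc 1 (nd 0)).filter (fun k => i ∈ Uset K nd nc k), x k ≤ d i := by
  set D := dual K nd nc d with hD
  have hD0 : D 0 = 0 := by
    apply le_antisymm
    · have := dual_le K nd nc d 0 ∅ (by simp)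
      simpa [unc] using this
    · obtain ⟨S, -, hS⟩ := dual_exists K nd nc d 0
      rw [hD, hS]
      have := Finset.sum_nonneg (s := S) (fun i _ => hd i)
      positivity
  have hmono : ∀ k, D k ≤ D (k + 1) := by
    intro k
    obtain ⟨S, h0, hS⟩ := dual_exists K nd nc d (k + 1)
    rw [hD, hS]
    refine (dual_le K nd nc d k S h0).trans ?_
    have : unc K nd nc S k ≤ unc K nd nc S (k + 1) := by
      unfold unc
      apply Finset.card_le_card
      apply Finset.filter_subset_filter
      exact Finset.Icc_subset_Icc_right (by omega)
    have : (unc K nd nc S k : ℝ) ≤ unc K nd nc S (k + 1) := by exact_mod_cast this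
    linarith
  have hstep : ∀ k, D (k + 1) ≤ D k + 1 := by
    intro k
    obtain ⟨S, h0, hS⟩ := dual_exists K nd nc d k
    rw [hD, hS]
    refine (dual_le K nd nc d (k + 1) S h0).trans ?_
    have : unc K nd nc S (k + 1) ≤ unc K nd nc S k + 1 := by
      unfold unc
      refine le_trans (Finset.card_le_card (t := insert (k + 1) _) ?_) (Finset.card_insert_le _ _)
      intro j
      simp only [Finset.mem_filter, Finset.mem_Icc, Finset.mem_insert]
      rintro ⟨⟨h1, h2⟩, h3⟩
      by_cases hj : j = k + 1
      · exact Or.inl hj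
      · exact Or.inr ⟨⟨h1, by omega⟩, h3⟩
    have : (unc K nd nc S (k + 1) : ℝ) ≤ unc K nd nc S k + 1 := by exact_mod_cast this
    linarith
  have hint : ∀ i, i ≠ 0 → D (min (nc i) (nd 0)) ≤ D (nc i - nd i) + d i := by
    intro i hi
    obtain ⟨S, h0, hS⟩ := dual_exists K nd nc d (nc i - nd i)
    rw [hD, hS]
    refine (dual_le K nd nc d _ (insert i S) (by simp [h0, hi.symm])).trans ?_
    have h1 : ∑ j ∈ insert i S, d j ≤ ∑ j ∈ S, d j + d i := by
      by_cases his : i ∈ S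
      · rw [Finset.insert_eq_of_mem his]
        linarith [hd i]
      · rw [Finset.sum_insert his]
        linarith
    have : unc K nd nc (insert i S) (min (nc i) (nd 0)) ≤ unc K nd nc S (nc i - nd i) := by
      unfold unc
      apply Finset.card_le_card
      intro j
      simp only [Finset.mem_filter, Finset.mem_Icc, le_min_iff]
      rintro ⟨⟨h1, h2, h3⟩, h4⟩
      have h5 : i ∉ Uset K nd nc j := by
        intro h5
        have : i ∈ Uset K nd nc j ∩ insert i S := by simp [h5]
        rw [h4] at this
        simp at this
      rw [mem_U_iff K nd nc i hi j h1] at h5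
      refine ⟨⟨h1, by omega⟩, ?_⟩
      rw [← Finset.subset_empty, ← h4]
      exact Finset.inter_subset_inter_left (Finset.subset_insert _ _)
    have : (unc K nd nc (insert i S) (min (nc i) (nd 0)) : ℝ) ≤ unc K nd nc S (nc i - nd i) := by
      exact_mod_cast this
    linarith
  have hDr : r ≤ D (nd 0) := by
    obtain ⟨S, h0, hS⟩ := dual_exists K nd nc d (nd 0)
    rw [hD, hS]
    exact h S h0
  set t := r / D (nd 0) with ht
  have ht0 : 0 ≤ t := div_nonneg hr (hr.trans hDr)
  have ht1 : t ≤ 1 := div_le_one_of_le₀ hDr (hr.trans hDr)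
  have htD : t * D (nd 0) = r := by
    rcases eq_or_ne (D (nd 0)) 0 with h0 | h0
    · rw [h0] at hDr ⊢
      linarith
    · rw [ht]
      field_simp
  refine ⟨fun k => t * (D k - D (k - 1)), ?_, ?_, ?_⟩
  · intro k hk
    obtain ⟨j, rfl⟩ := Nat.exists_eq_add_of_le' hk
    have h1 := hmono j
    have h2 := hstep j
    simp only [Nat.add_sub_cancel]
    constructor
    · exact mul_nonneg ht0 (by linarith)
    · exact mul_le_one₀ ht1 (by linarith) (by linarith)
  · rw [← Finset.mul_sum]
    have : Finset.Icc 1 (nd 0) = Finset.Ioc 0 (nd 0) := by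
      ext k
      simp only [Finset.mem_Icc, Finset.mem_Ioc]
      omega
    rw [this, tele D 0 _ (by omega), hD0, sub_zero, htD]
  · intro i hi
    have := hreg i hi
    rw [← Finset.mul_sum, levels_eq K nd nc i hi, tele D _ _ (le_min (by omega) (by omega))]
    have h1 := hint i hi
    calc t * (D (min (nc i) (nd 0)) - D (nc i - nd i)) ≤ t * d i :=
          mul_le_mul_of_nonneg_left (by linarith) ht0
      _ ≤ 1 * d i := mul_le_mul_of_nonneg_right ht1 (hd i)
      _ = d i := one_mul _

/-- The achievable region equals the outer bound for the deterministic many-to-one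
interference channel:  `C̲ = C̄`. -/
theorem achievable_eq_outer (K : ℕ) (hK : 1 ≤ K) (nd nc : Fin (K + 1) → ℕ)
    (hreg : ∀ i : Fin (K + 1), i ≠ 0 → nc i ≤ nd 0 + nd i) :
    achievableRegion K nd nc = outerRegion K nd nc := by
  have hU0 : ∀ k, (0 : Fin (K + 1)) ∉ Uset K nd nc k := by
    intro k
    simp [Uset]
  ext r
  unfold achievableRegion
  rw [Set.mem_add]
  simp only [Set.mem_finset_sum]
  constructor
  · rintro ⟨f, ⟨hf0, hf⟩, _, ⟨g, hg, rfl⟩, rfl⟩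
    have hnn : ∀ k ∈ Finset.Icc 1 (nd 0), ∀ i, 0 ≤ g k i := by
      intro k hk i
      obtain ⟨h1, h2, h3, h4⟩ := hg hk
      by_cases hi : i = 0
      · rw [hi]; exact h1
      by_cases hiU : i ∈ Uset K nd nc k
      · exact (h3 i hiU).1
      · rw [h4 i hi hiU]
    simp only [outerRegion, Set.mem_setOf_eq, Pi.add_apply, Finset.sum_apply]
    refine ⟨?_, ?_⟩
    · intro i
      by_cases hi : i = 0
      · subst hi
        rw [hf0, zero_add]
        refine ⟨Finset.sum_nonneg fun k hk => hnn k hk 0, ?_⟩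
        calc ∑ k ∈ Finset.Icc 1 (nd 0), g k 0 ≤ ∑ k ∈ Finset.Icc 1 (nd 0), (1 : ℝ) :=
              Finset.sum_le_sum fun k hk => (hg hk).2.1
          _ = nd 0 := by simp
      · refine ⟨add_nonneg (hf i hi).1 (Finset.sum_nonneg fun k hk => hnn k hk i), ?_⟩
        rw [← ffree_add_card K nd nc i hi (hreg i hi)]
        push_cast
        refine add_le_add (hf i hi).2 ?_
        rw [Finset.card_filter]
        push_cast
        refine Finset.sum_le_sum fun k hk => ?_
        obtain ⟨h1, h2, h3, h4⟩ := hg hk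
        split_ifs with hiU
        · exact (h3 i hiU).2.1
        · exact (h4 i hi hiU).le
    · intro S h0 hne
      rw [hf0, zero_add, Finset.sum_add_distrib, Finset.sum_comm, add_left_comm,
        ← Finset.sum_add_distrib]
      unfold sumBound
      rw [Nat.cast_add, Nat.cast_sum, Nat.cast_sum]
      refine add_le_add (Finset.sum_le_sum fun i hi => (hf i (fun h => h0 (h ▸ hi))).2) ?_
      refine Finset.sum_le_sum fun k hk => ?_
      obtain ⟨h1, h2, h3, h4⟩ := hg hk
      have hs : ∑ i ∈ S, g k i = ∑ i ∈ Uset K nd nc k ∩ S, g k i := by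
        symm
        apply Finset.sum_subset Finset.inter_subset_right
        intro i hiS hi
        refine h4 i (fun h => h0 (h ▸ hiS)) (fun h => hi ?_)
        simp [h, hiS]
      rw [hs]
      rcases Finset.eq_empty_or_nonempty (Uset K nd nc k ∩ S) with he | hne
      · rw [he]
        simpa using h2
      · have hc : 1 ≤ (Uset K nd nc k ∩ S).card := Finset.card_pos.mpr hne
        rw [max_eq_left hc]
        have hc' : (1 : ℝ) ≤ (Uset K nd nc k ∩ S).card := by exact_mod_cast hc
        have h5 : ∑ i ∈ Uset K nd nc k ∩ S, g k i
            ≤ ∑ i ∈ Uset K nd nc k ∩ S, (1 - g k 0) := by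
          refine Finset.sum_le_sum fun i hi => ?_
          have := (h3 i (Finset.mem_inter.mp hi).1).2.2
          linarith
        rw [Finset.sum_const, nsmul_eq_mul] at h5
        nlinarith
  · rintro ⟨hbox, hsum⟩
    obtain ⟨x, hx, hxs, hxi⟩ := exists_levels K nd nc hreg (fun i => nd i - r i)
      (fun i => by linarith [(hbox i).2]) (r 0) (hbox 0).1 (by
        intro S h0
        rcases Finset.eq_empty_or_nonempty S with he | hne
        · subst he
          have := (hbox 0).2
          simpa [unc] using this
        · have := hsum S h0 hne
          rw [sumBound_eq K nd nc hreg S h0] at this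
          push_cast at this
          rw [Finset.sum_sub_distrib]
          linarith)
    -- total room for user `i`
    set T : Fin (K + 1) → ℝ := fun i => ffree K nd nc i
      + ∑ k ∈ Finset.Icc 1 (nd 0), if i ∈ Uset K nd nc k then 1 - x k else 0 with hT
    have hTr : ∀ i, i ≠ 0 → r i ≤ T i := by
      intro i hi
      have h1 := hxi i hi
      have h2 : ((ffree K nd nc i : ℝ)
          + ((Finset.Icc 1 (nd 0)).filter (fun k => i ∈ Uset K nd nc k)).card) = nd i := by
        exact_mod_cast ffree_add_card K nd nc i hi (hreg i hi)
      simp only [hT]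
      rw [← Finset.sum_filter, Finset.sum_sub_distrib]
      simp only [Finset.sum_const, nsmul_eq_mul, mul_one]
      linarith
    set l : Fin (K + 1) → ℝ := fun i => r i / T i with hl
    have hl0 : ∀ i, i ≠ 0 → 0 ≤ l i := fun i hi =>
      div_nonneg (hbox i).1 ((hbox i).1.trans (hTr i hi))
    have hl1 : ∀ i, i ≠ 0 → l i ≤ 1 := fun i hi =>
      div_le_one_of_le₀ (hTr i hi) ((hbox i).1.trans (hTr i hi))
    have hlT : ∀ i, i ≠ 0 → l i * T i = r i := by
      intro i hi
      rcases eq_or_ne (T i) 0 with h0 | h0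
      · have h1 := hTr i hi
        rw [h0] at h1 ⊢
        linarith [(hbox i).1]
      · simp only [hl]
        field_simp
    refine ⟨fun i => if i = 0 then 0 else l i * ffree K nd nc i, ⟨by simp, ?_⟩, _,
      ⟨fun k i => if i = 0 then x k else if i ∈ Uset K nd nc k then l i * (1 - x k) else 0,
        ?_, rfl⟩, ?_⟩
    · intro i hi
      simp only [hi, if_false]
      have hff : (0 : ℝ) ≤ ffree K nd nc i := Nat.cast_nonneg _
      exact ⟨mul_nonneg (hl0 i hi) hff, mul_le_of_le_one_left hff (hl1 i hi)⟩
    · intro k hk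
      obtain ⟨h1, h2⟩ := hx k (Finset.mem_Icc.mp hk).1
      refine ⟨by simpa using h1, by simpa using h2, ?_, ?_⟩
      · intro i hiU
        have hi : i ≠ 0 := fun h => hU0 k (h ▸ hiU)
        simp only [hi, hiU, if_true, if_false]
        have h3 := mul_nonneg (hl0 i hi) (sub_nonneg.mpr h2)
        have h4 := mul_le_of_le_one_left (sub_nonneg.mpr h2) (hl1 i hi)
        exact ⟨h3, by linarith, by linarith⟩
      · intro i hi hiU
        simp [hi, hiU]
    · ext i
      simp only [Pi.add_apply, Finset.sum_apply]
      by_cases hi : i = 0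
      · subst hi
        simpa using hxs
      · simp only [hi, if_false]
        rw [← hlT i hi]
        simp only [hT]
        rw [mul_add, Finset.mul_sum]
        congr 1
        refine Finset.sum_congr rfl fun k _ => ?_
        split_ifs <;> simp
end

section
/- For every compatible collection A of constraints of C̄ there exists a rate point r ∈ C̲ that satisfies every constraint in A with equality (i.e., every corner assignment corresponding to a pairwise compatible family of constraints is simultaneously achievable by the level-allocation scheme). -/
open Finset Pointwise

/-- A constraint of the outer bound `C̄`: either an individual rate constraint on a user,
or a sum-rate constraint on a set `S ⊆ {1,…,K}` of interfering users. -/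
inductive MTOConstraint (K : ℕ) where
  | indiv : Fin (K + 1) → MTOConstraint K
  | sumRate : Finset (Fin (K + 1)) → MTOConstraint K

/-- Validity: a sum-rate constraint must be on a nonempty subset of `{1,…,K}`. -/
def MTOConstraint.Valid {K : ℕ} : MTOConstraint K → Prop
  | .indiv _ => True
  | .sumRate S => S.Nonempty ∧ 0 ∉ S

/-- Solid neighbours of a constraint in the bipartite graph on levels `{1,…,n_{00}}`. -/
def Nsolid (K : ℕ) (nd nc : Fin (K + 1) → ℕ) : MTOConstraint K → Finset ℕ
  | .indiv i =>
      if i = 0 then ∅ else (Finset.Icc 1 (nd 0)).filter fun k => i ∈ Uset K nd nc k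
  | .sumRate S =>
      (Finset.Icc 1 (nd 0)).filter fun k => 2 ≤ (Uset K nd nc k ∩ S).card

/-- Dashed neighbours of a constraint in the bipartite graph on levels `{1,…,n_{00}}`. -/
def Ndashed (K : ℕ) (nd nc : Fin (K + 1) → ℕ) : MTOConstraint K → Finset ℕ
  | .indiv i => if i = 0 then Finset.Icc 1 (nd 0) else ∅
  | .sumRate S =>
      (Finset.Icc 1 (nd 0)).filter fun k => Uset K nd nc k ∩ S = ∅

/-- Two constraints are compatible if no solid edge of one meets a dashed edge of the other. -/
def Compatible (K : ℕ) (nd nc : Fin (K + 1) → ℕ) (v v' : MTOConstraint K) : Prop :=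
  Nsolid K nd nc v ∩ Ndashed K nd nc v' = ∅ ∧ Nsolid K nd nc v' ∩ Ndashed K nd nc v = ∅

/-- A rate point satisfies a constraint with equality. -/
def TightAt (K : ℕ) (nd nc : Fin (K + 1) → ℕ) (r : Fin (K + 1) → ℝ) :
    MTOConstraint K → Prop
  | .indiv i => r i = (nd i : ℝ)
  | .sumRate S => r 0 + ∑ i ∈ S, r i = (sumBound K nd nc S : ℝ)

lemma count_levels (K : ℕ) (nd nc : Fin (K + 1) → ℕ) (i : Fin (K + 1)) (hi : i ≠ 0)
    (h : nc i ≤ nd 0 + nd i) :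
    ffree K nd nc i + ((Finset.Icc 1 (nd 0)).filter fun k => i ∈ Uset K nd nc k).card = nd i := by
  have : ((Finset.Icc 1 (nd 0)).filter fun k => i ∈ Uset K nd nc k)
      = Finset.Ioc (nc i - nd i) (min (nc i) (nd 0)) := by
    ext k
    simp only [Uset, Finset.mem_filter, Finset.mem_univ, true_and, Finset.mem_Icc,
      Finset.mem_Ioc, ne_eq, hi, not_false_eq_true, le_min_iff]
    omega
  rw [this, Nat.card_Ioc, ffree]
  omega

/-- For every pairwise compatible collection `A` of constraints of `C̄` there exists a rate
point `r ∈ C̲` satisfying every constraint in `A` with equality. -/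
theorem compatible_implies_achievable (K : ℕ) (hK : 1 ≤ K) (nd nc : Fin (K + 1) → ℕ)
    (hreg : ∀ i : Fin (K + 1), i ≠ 0 → nc i ≤ nd 0 + nd i)
    (A : Set (MTOConstraint K))
    (hvalid : ∀ v ∈ A, v.Valid)
    (hcompat : ∀ v ∈ A, ∀ v' ∈ A, Compatible K nd nc v v') :
    ∃ r ∈ achievableRegion K nd nc, ∀ v ∈ A, TightAt K nd nc r v := by
  classical
  let D : ℕ → Prop := fun k => ∃ v ∈ A, k ∈ Ndashed K nd nc v
  have hz : ∀ k, (0 : Fin (K + 1)) ∉ Uset K nd nc k := fun k => by simp [Uset]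
  have hsolid : ∀ v ∈ A, ∀ k ∈ Nsolid K nd nc v, ¬ D k := by
    rintro v hv k hk ⟨w, hw, hkw⟩
    have h1 := (hcompat v hv w hw).1
    have : k ∈ Nsolid K nd nc v ∩ Ndashed K nd nc w := Finset.mem_inter.2 ⟨hk, hkw⟩
    rw [h1] at this
    exact absurd this (Finset.notMem_empty _)
  let g : ℕ → Fin (K + 1) → ℝ := fun k i =>
    if D k then (if i = 0 then 1 else 0) else (if i ∈ Uset K nd nc k then 1 else 0)
  let h : Fin (K + 1) → ℝ := fun i => if i = 0 then 0 else (ffree K nd nc i : ℝ)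
  refine ⟨h + ∑ k ∈ Finset.Icc 1 (nd 0), g k, Set.add_mem_add ?_ ?_, ?_⟩
  · refine ⟨by simp [h], fun i hi => ?_⟩
    simp [h, hi]
  · refine Set.finsetSum_mem_finsetSum _ _ _ fun k _ => ?_
    by_cases hD : D k
    · refine ⟨by simp [g, hD], by simp [g, hD], fun i hi => ?_, fun i hi hiU => ?_⟩
      · have : i ≠ 0 := fun e => hz k (e ▸ hi)
        simp [g, hD, this]
      · simp [g, hD, hi]
    · refine ⟨by simp [g, hD, hz], by simp [g, hD, hz], fun i hi => ?_, fun i hi hiU => ?_⟩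
      · simp [g, hD, hi, hz]
      · simp [g, hD, hiU]
  · rintro (i | S) hv
    · by_cases hi : i = 0
      · subst hi
        have : ∀ k ∈ Finset.Icc 1 (nd 0), g k 0 = 1 := fun k hk => by
          have hD : D k := ⟨_, hv, by simpa [Ndashed] using hk⟩
          simp [g, hD]
        simp only [TightAt, Pi.add_apply, Finset.sum_apply]
        rw [Finset.sum_congr rfl this]
        simp [h]
      · have : ∀ k ∈ Finset.Icc 1 (nd 0), g k i = if i ∈ Uset K nd nc k then 1 else 0 := by
          intro k hk
          by_cases hU : i ∈ Uset K nd nc k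
          · have hD : ¬ D k := hsolid _ hv k (by
              simp only [Nsolid, hi, if_false]
              exact Finset.mem_filter.2 ⟨hk, hU⟩)
            simp [g, hD]
          · simp [g, hU, hi]
        simp only [TightAt, Pi.add_apply, Finset.sum_apply]
        rw [Finset.sum_congr rfl this, Finset.sum_boole, ← count_levels K nd nc i hi (hreg i hi)]
        simp [h, hi]
    · have h0 : (0 : Fin (K + 1)) ∉ S := (hvalid _ hv).2
      have hne : ∀ i ∈ S, i ≠ 0 := fun i hi e => h0 (e ▸ hi)
      have key : ∀ k ∈ Finset.Icc 1 (nd 0), g k 0 + ∑ i ∈ S, g k i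
          = ((max ((Uset K nd nc k ∩ S).card) 1 : ℕ) : ℝ) := by
        intro k hk
        by_cases hD : D k
        · have hc : (Uset K nd nc k ∩ S).card ≤ 1 := by
            by_contra hc
            exact hsolid _ hv k (Finset.mem_filter.2 ⟨hk, by omega⟩) hD
          rw [max_eq_right hc]
          simp [g, hD, h0]
        · have hc : 1 ≤ (Uset K nd nc k ∩ S).card := by
            rw [Nat.one_le_iff_ne_zero]
            intro hc
            exact hD ⟨_, hv, Finset.mem_filter.2 ⟨hk, Finset.card_eq_zero.1 hc⟩⟩
          rw [max_eq_left hc]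
          simp only [g, hD, if_false, hz, Finset.sum_boole, zero_add]
          rw [Finset.inter_comm, Finset.filter_mem_eq_inter]
      have hh : ∑ i ∈ S, h i = ∑ i ∈ S, (ffree K nd nc i : ℝ) :=
        Finset.sum_congr rfl fun i hi => by simp [h, hne i hi]
      have hh0 : h 0 = 0 := by simp [h]
      simp only [TightAt, Pi.add_apply, Finset.sum_apply, sumBound, Nat.cast_add, Nat.cast_sum]
      rw [← Finset.sum_congr rfl key, Finset.sum_add_distrib, Finset.sum_add_distrib, hh, hh0,
        Finset.sum_comm (s := S)]
      ring
end

section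
/- If a collection of constraints of C̄ is consistent — that is, some point of C̄ satisfies every constraint in the collection with equality — then the collection is compatible. Equivalently (contrapositive): if two constraints v, v′ of C̄ are incompatible, then no point of C̄ satisfies both of them with equality. -/
open Finset

/-- Two-colouring of a finite family of integer intervals `(l i, u i]` with discrepancy at most 1. -/
lemma interval_disc {ι : Type*} [DecidableEq ι] : ∀ (n : ℕ) (D : Finset ι) (l u : ι → ℤ),
    D.card = n → (∀ i ∈ D, l i ≤ u i) →
    ∃ ε : ι → ℤ, (∀ i, ε i = 1 ∨ ε i = -1) ∧
      ∀ x : ℤ, |∑ i ∈ D, if l i < x ∧ x ≤ u i then ε i else 0| ≤ 1 := by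
  intro n
  induction n with
  | zero =>
    intro D l u hD _
    refine ⟨fun _ => 1, fun _ => Or.inl rfl, fun x => ?_⟩
    rw [Finset.card_eq_zero] at hD
    subst hD
    simp
  | succ n ih =>
    intro D l u hD hlu
    have hne : D.Nonempty := by
      rw [← Finset.card_pos]; omega
    obtain ⟨i, hi, hmin⟩ := Finset.exists_min_image D l hne
    by_cases hne' : (D.erase i).Nonempty
    swap
    · rw [Finset.not_nonempty_iff_eq_empty] at hne'
      refine ⟨fun _ => 1, fun _ => Or.inl rfl, fun x => ?_⟩
      rw [← Finset.add_sum_erase D _ hi, hne']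
      simp only [Finset.sum_empty, add_zero]
      split_ifs <;> simp
    obtain ⟨j, hj, hjmin⟩ := Finset.exists_min_image (D.erase i) l hne'
    have hjD : j ∈ D := Finset.mem_of_mem_erase hj
    have hji : j ≠ i := Finset.ne_of_mem_erase hj
    -- points at or below `l j` are covered by `i` only
    have hlow : ∀ ε : ι → ℤ, (∀ i, ε i = 1 ∨ ε i = -1) → ∀ x ≤ l j,
        |∑ i ∈ D, if l i < x ∧ x ≤ u i then ε i else 0| ≤ 1 := by
      intro ε hε x hx
      rw [← Finset.add_sum_erase D _ hi, Finset.sum_eq_zero, add_zero]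
      · rcases hε i with h | h <;> rw [h] <;> split_ifs <;> simp
      · intro m hm
        have := hjmin m hm
        rw [if_neg]
        omega
    by_cases hc : u i ≤ l j
    · obtain ⟨ε, hε, hs⟩ := ih (D.erase i) l u (by rw [Finset.card_erase_of_mem hi]; omega)
        (fun m hm => hlu m (Finset.mem_of_mem_erase hm))
      refine ⟨ε, hε, fun x => ?_⟩
      by_cases hx : x ≤ l j
      · exact hlow ε hε x hx
      · rw [← Finset.add_sum_erase D _ hi, if_neg (by omega), zero_add]
        exact hs x
    · push Not at hc
      have key : ∃ p q, p ∈ D ∧ q ∈ D ∧ p ≠ q ∧ u q ≤ u p ∧ l j ≤ u q ∧ l p ≤ l j ∧ l q ≤ l j := by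
        have h1 := hlu j hjD
        have h2 := hmin j hjD
        rcases le_total (u i) (u j) with h | h
        · exact ⟨j, i, hjD, hi, hji, h, by omega, le_refl _, h2⟩
        · exact ⟨i, j, hi, hjD, hji.symm, h, h1, h2, le_refl _⟩
      obtain ⟨p, q, hp, hq, hpq, huu, hlq, hlp, hlq'⟩ := key
      have hpe : p ∈ D.erase q := Finset.mem_erase.2 ⟨hpq, hp⟩
      obtain ⟨ε, hε, hs⟩ := ih (D.erase q) (Function.update l p (u q)) u
        (by rw [Finset.card_erase_of_mem hq]; omega)
        (fun m hm => by
          by_cases hmp : m = p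
          · subst hmp; simpa using huu
          · simpa [hmp] using hlu m (Finset.mem_of_mem_erase hm))
      have hε' : ∀ m, Function.update ε q (-ε p) m = 1 ∨ Function.update ε q (-ε p) m = -1 := by
        intro m
        by_cases hm : m = q
        · subst hm
          rcases hε p with h | h <;> simp [h]
        · simpa [hm] using hε m
      refine ⟨Function.update ε q (-ε p), hε', fun x => ?_⟩
      by_cases hx : x ≤ l j
      · exact hlow _ hε' x hx
      · have := hs x
        rw [← Finset.add_sum_erase _ _ hpe] at this
        rw [← Finset.add_sum_erase D _ hq, ← Finset.add_sum_erase _ _ hpe, ← add_assoc]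
        convert this using 3
        · simp only [Function.update_self, Function.update_of_ne hpq]
          split_ifs <;> omega
        · apply Finset.sum_congr rfl
          intro m hm
          have hmp := Finset.ne_of_mem_erase hm
          have hmq := Finset.ne_of_mem_erase (Finset.mem_of_mem_erase hm)
          simp only [Function.update_of_ne hmp, Function.update_of_ne hmq]

/-- Uncrossing: redistribute the elements of `S`, `S'` in a balanced way. -/
lemma exists_split (K : ℕ) (nd nc : Fin (K + 1) → ℕ) (S S' : Finset (Fin (K + 1)))
    (h0 : 0 ∉ S) (h0' : 0 ∉ S') :
    ∃ T T' : Finset (Fin (K + 1)), 0 ∉ T ∧ 0 ∉ T' ∧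
      (∀ g : Fin (K + 1) → ℝ, ∑ i ∈ T, g i + ∑ i ∈ T', g i = ∑ i ∈ S, g i + ∑ i ∈ S', g i) ∧
      ∀ k : ℕ, 2 ≤ (Uset K nd nc k ∩ S).card + (Uset K nd nc k ∩ S').card →
        1 ≤ (Uset K nd nc k ∩ T).card ∧ 1 ≤ (Uset K nd nc k ∩ T').card := by
  obtain ⟨ε, hε, hs⟩ := interval_disc _ ((S \ S') ∪ (S' \ S))
    (fun i => (nc i : ℤ) - nd i) (fun i => (nc i : ℤ)) rfl (fun i _ => by simp)
  have hd : Disjoint (S \ S') (S' \ S) := by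
    rw [Finset.disjoint_left]; intro a; simp only [Finset.mem_sdiff]; tauto
  set D := (S \ S') ∪ (S' \ S) with hD
  have hDI : ∀ P : Fin (K + 1) → Prop, ∀ [DecidablePred P],
      Disjoint (S ∩ S') (D.filter P) := by
    intro P _
    rw [Finset.disjoint_left]; intro a
    simp only [hD, Finset.mem_inter, Finset.mem_filter, Finset.mem_union, Finset.mem_sdiff]; tauto
  refine ⟨(S ∩ S') ∪ D.filter (fun i => ε i = 1), (S ∩ S') ∪ D.filter (fun i => ¬ ε i = 1),
    ?_, ?_, ?_, ?_⟩
  · simp [hD, h0, h0']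
  · simp [hD, h0, h0']
  · intro g
    rw [Finset.sum_union (hDI _), Finset.sum_union (hDI _)]
    have h1 := Finset.sum_filter_add_sum_filter_not D (fun i => ε i = 1) g
    have h2 : ∑ i ∈ D, g i = _ := Finset.sum_union hd
    have h3 := Finset.sum_inter_add_sum_sdiff S S' g
    have h4 := Finset.sum_inter_add_sum_sdiff S' S g
    rw [Finset.inter_comm] at h4
    linarith
  · intro k hk
    by_cases hI : ∃ i ∈ S ∩ S', i ∈ Uset K nd nc k
    · obtain ⟨i, hi, hiU⟩ := hI
      constructor <;>
      · rw [Nat.succ_le_iff, Finset.card_pos]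
        exact ⟨i, Finset.mem_inter.2 ⟨hiU, Finset.mem_union_left _ hi⟩⟩
    push Not at hI
    have hc : (Uset K nd nc k ∩ S).card + (Uset K nd nc k ∩ S').card
        = (D.filter (fun i => i ∈ Uset K nd nc k)).card := by
      rw [← Finset.card_union_of_disjoint]
      · congr 1
        ext a
        have := hI a
        simp only [hD, Finset.mem_inter, Finset.mem_filter, Finset.mem_union,
          Finset.mem_sdiff] at this ⊢
        tauto
      · rw [Finset.disjoint_left]; intro a
        have := hI a
        simp only [Finset.mem_inter] at this ⊢
        tauto
    rw [hc] at hk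
    have hsum : |∑ i ∈ D.filter (fun i => i ∈ Uset K nd nc k), ε i| ≤ 1 := by
      have := hs k
      rw [Finset.sum_filter]
      convert this using 3 with i hi
      have hi0 : i ≠ 0 := by
        rintro rfl
        simp [hD, h0, h0'] at hi
      simp [Uset, hi0]
    constructor
    · by_contra hcon
      have hall : ∀ i ∈ D.filter (fun i => i ∈ Uset K nd nc k), ε i = -1 := by
        intro i hi
        rw [Finset.mem_filter] at hi
        rcases hε i with h | h
        · exfalso
          apply hcon
          rw [Nat.succ_le_iff, Finset.card_pos]
          exact ⟨i, Finset.mem_inter.2 ⟨hi.2, Finset.mem_union_right _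
            (Finset.mem_filter.2 ⟨hi.1, h⟩)⟩⟩
        · exact h
      rw [Finset.sum_congr rfl hall] at hsum
      simp only [Finset.sum_const, nsmul_eq_mul] at hsum
      rw [abs_le] at hsum
      omega
    · by_contra hcon
      have hall : ∀ i ∈ D.filter (fun i => i ∈ Uset K nd nc k), ε i = 1 := by
        intro i hi
        rw [Finset.mem_filter] at hi
        by_contra h
        apply hcon
        rw [Nat.succ_le_iff, Finset.card_pos]
        exact ⟨i, Finset.mem_inter.2 ⟨hi.2, Finset.mem_union_right _
            (Finset.mem_filter.2 ⟨hi.1, h⟩)⟩⟩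
      rw [Finset.sum_congr rfl hall] at hsum
      simp only [Finset.sum_const, nsmul_eq_mul] at hsum
      rw [abs_le] at hsum
      omega

lemma region_all {K : ℕ} {nd nc : Fin (K + 1) → ℕ} {r : Fin (K + 1) → ℝ}
    (hr : r ∈ outerRegion K nd nc) (S : Finset (Fin (K + 1))) (h0 : 0 ∉ S) :
    r 0 + ∑ i ∈ S, r i ≤ (sumBound K nd nc S : ℝ) := by
  rcases S.eq_empty_or_nonempty with rfl | h
  · have := (hr.1 0).2
    simpa [sumBound] using this
  · exact hr.2 S h0 h

lemma no_sum_sum {K : ℕ} {nd nc : Fin (K + 1) → ℕ} {r : Fin (K + 1) → ℝ}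
    (hr : r ∈ outerRegion K nd nc) (S S' : Finset (Fin (K + 1))) (h0 : 0 ∉ S) (h0' : 0 ∉ S')
    (ht : r 0 + ∑ i ∈ S, r i = (sumBound K nd nc S : ℝ))
    (ht' : r 0 + ∑ i ∈ S', r i = (sumBound K nd nc S' : ℝ))
    (k : ℕ) (hk : k ∈ Finset.Icc 1 (nd 0)) (hks : 2 ≤ (Uset K nd nc k ∩ S).card)
    (hkd : Uset K nd nc k ∩ S' = ∅) : False := by
  obtain ⟨T, T', hT0, hT0', hsum, hcov⟩ := exists_split K nd nc S S' h0 h0'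
  have hT := region_all hr T hT0
  have hT' := region_all hr T' hT0'
  have hrs := hsum r
  have hfree : ∑ i ∈ T, ffree K nd nc i + ∑ i ∈ T', ffree K nd nc i
      = ∑ i ∈ S, ffree K nd nc i + ∑ i ∈ S', ffree K nd nc i := by
    exact_mod_cast hsum (fun i => (ffree K nd nc i : ℝ))
  have hcard : ∀ k, (Uset K nd nc k ∩ T).card + (Uset K nd nc k ∩ T').card
      = (Uset K nd nc k ∩ S).card + (Uset K nd nc k ∩ S').card := by
    intro k
    have := hsum (fun i => if i ∈ Uset K nd nc k then 1 else 0)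
    simp only [Finset.sum_boole, Finset.filter_mem_eq_inter] at this
    simp only [Finset.inter_comm (Uset K nd nc k)]
    exact_mod_cast this
  have hlt : ∑ k ∈ Finset.Icc 1 (nd 0),
        (max ((Uset K nd nc k ∩ T).card) 1 + max ((Uset K nd nc k ∩ T').card) 1)
      < ∑ k ∈ Finset.Icc 1 (nd 0),
        (max ((Uset K nd nc k ∩ S).card) 1 + max ((Uset K nd nc k ∩ S').card) 1) := by
    apply Finset.sum_lt_sum
    · intro m _
      have h1 := hcard m
      have h2 := hcov m
      omega
    · refine ⟨k, hk, ?_⟩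
      have h1 := hcard k
      have h2 := hcov k
      rw [hkd] at h1 h2 ⊢
      simp only [Finset.card_empty] at h1 h2 ⊢
      omega
  rw [Finset.sum_add_distrib, Finset.sum_add_distrib] at hlt
  have hb : sumBound K nd nc T + sumBound K nd nc T' < sumBound K nd nc S + sumBound K nd nc S' := by
    unfold sumBound; omega
  have hb' : (sumBound K nd nc T : ℝ) + sumBound K nd nc T'
      < sumBound K nd nc S + sumBound K nd nc S' := by exact_mod_cast hb
  linarith

lemma direct_eq {K : ℕ} {nd nc : Fin (K + 1) → ℕ} (i : Fin (K + 1)) (hi : i ≠ 0)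
    (hreg : nc i ≤ nd 0 + nd i) :
    nd i = ffree K nd nc i +
      ∑ k ∈ Finset.Icc 1 (nd 0), if i ∈ Uset K nd nc k then 1 else 0 := by
  rw [← Finset.card_filter]
  have : (Finset.Icc 1 (nd 0)).filter (fun k => i ∈ Uset K nd nc k)
      = Finset.Ioc (nc i - nd i) (min (nc i) (nd 0)) := by
    ext k
    simp only [Uset, Finset.mem_filter, Finset.mem_univ, true_and, Finset.mem_Icc, Finset.mem_Ioc,
      hi, ne_eq, not_false_eq_true]
    omega
  rw [this, Nat.card_Ioc]
  unfold ffree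
  omega

lemma no_ind_sum {K : ℕ} {nd nc : Fin (K + 1) → ℕ} {r : Fin (K + 1) → ℝ}
    (hr : r ∈ outerRegion K nd nc) (i : Fin (K + 1)) (hi : i ≠ 0)
    (hreg : nc i ≤ nd 0 + nd i) (S : Finset (Fin (K + 1))) (h0 : 0 ∉ S)
    (hti : r i = (nd i : ℝ))
    (ht : r 0 + ∑ i ∈ S, r i = (sumBound K nd nc S : ℝ))
    (k : ℕ) (hk : k ∈ Finset.Icc 1 (nd 0)) (hks : i ∈ Uset K nd nc k)
    (hkd : Uset K nd nc k ∩ S = ∅) : False := by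
  have hiS : i ∉ S := by
    intro h
    have : i ∈ Uset K nd nc k ∩ S := Finset.mem_inter.2 ⟨hks, h⟩
    rw [hkd] at this
    simp at this
  have hT := region_all hr (insert i S) (by simp [hi.symm, h0])
  rw [Finset.sum_insert hiS] at hT
  have hlt : ∑ k ∈ Finset.Icc 1 (nd 0), max ((Uset K nd nc k ∩ insert i S).card) 1
      < ∑ k ∈ Finset.Icc 1 (nd 0),
        (max ((Uset K nd nc k ∩ S).card) 1 + if i ∈ Uset K nd nc k then 1 else 0) := by
    have hins : ∀ m, (Uset K nd nc m ∩ insert i S).card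
        = (Uset K nd nc m ∩ S).card + if i ∈ Uset K nd nc m then 1 else 0 := by
      intro m
      split_ifs with h
      · rw [Finset.inter_insert_of_mem h, Finset.card_insert_of_notMem]
        simp [hiS]
      · rw [Finset.inter_insert_of_notMem h, add_zero]
    apply Finset.sum_lt_sum
    · intro m _
      rw [hins]
      split_ifs <;> omega
    · refine ⟨k, hk, ?_⟩
      rw [hins, hkd, if_pos hks]
      simp
  rw [Finset.sum_add_distrib] at hlt
  have hd := direct_eq i hi hreg
  have hb : sumBound K nd nc (insert i S) < sumBound K nd nc S + nd i := by
    unfold sumBound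
    rw [Finset.sum_insert hiS]
    omega
  have hb' : (sumBound K nd nc (insert i S) : ℝ) < sumBound K nd nc S + nd i := by
    exact_mod_cast hb
  linarith

lemma half_compat {K : ℕ} {nd nc : Fin (K + 1) → ℕ}
    (hreg : ∀ i : Fin (K + 1), i ≠ 0 → nc i ≤ nd 0 + nd i) {r : Fin (K + 1) → ℝ}
    (hr : r ∈ outerRegion K nd nc) (v v' : MTOConstraint K) (hv : v.Valid) (hv' : v'.Valid)
    (ht : TightAt K nd nc r v) (ht' : TightAt K nd nc r v') :
    Nsolid K nd nc v ∩ Ndashed K nd nc v' = ∅ := by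
  rw [Finset.eq_empty_iff_forall_notMem]
  intro k hk
  rw [Finset.mem_inter] at hk
  obtain ⟨hs, hd⟩ := hk
  -- a constraint with a dashed edge is a (possibly empty) sum-rate constraint
  have hdash : ∃ S : Finset (Fin (K + 1)), 0 ∉ S ∧
      r 0 + ∑ i ∈ S, r i = (sumBound K nd nc S : ℝ) ∧ k ∈ Finset.Icc 1 (nd 0) ∧
      Uset K nd nc k ∩ S = ∅ := by
    cases v' with
    | indiv i =>
      by_cases hi : i = 0
      · subst hi
        simp only [Ndashed, if_true] at hd
        refine ⟨∅, by simp, ?_, hd, by simp⟩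
        simpa [sumBound, TightAt] using ht'
      · simp [Ndashed, hi] at hd
    | sumRate S =>
      simp only [Ndashed, Finset.mem_filter] at hd
      exact ⟨S, hv'.2, ht', hd.1, hd.2⟩
  obtain ⟨S', h0', hS', hk, hkd⟩ := hdash
  cases v with
  | indiv i =>
    by_cases hi : i = 0
    · simp [Nsolid, hi] at hs
    · simp only [Nsolid, hi, if_false, Finset.mem_filter] at hs
      exact no_ind_sum hr i hi (hreg i hi) S' h0' ht hS' k hk hs.2 hkd
  | sumRate S =>
    simp only [Nsolid, Finset.mem_filter] at hs
    exact no_sum_sum hr S S' hv.2 h0' ht hS' k hk hs.2 hkd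

/-- If a collection of constraints of `C̄` is consistent — some point of `C̄` satisfies every
constraint in the collection with equality — then the collection is pairwise compatible. -/
theorem consistent_implies_compatible (K : ℕ) (hK : 1 ≤ K) (nd nc : Fin (K + 1) → ℕ)
    (hreg : ∀ i : Fin (K + 1), i ≠ 0 → nc i ≤ nd 0 + nd i)
    (A : Set (MTOConstraint K))
    (hvalid : ∀ v ∈ A, v.Valid)
    (hconsistent : ∃ r ∈ outerRegion K nd nc, ∀ v ∈ A, TightAt K nd nc r v) :
    ∀ v ∈ A, ∀ v' ∈ A, Compatible K nd nc v v' := by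

  obtain ⟨r, hr, ht⟩ := hconsistent
  intro v hv v' hv'
  exact ⟨half_compat hreg hr v v' (hvalid v hv) (hvalid v' hv') (ht v hv) (ht v' hv'),
    half_compat hreg hr v' v (hvalid v' hv') (hvalid v hv) (ht v' hv') (ht v hv)⟩
end

section
/- Occlusion lemma. Let I ⊆ {1,…,K} be nonempty and let i ∈ I be occluded by I, meaning that for every level k ∈ {1,…,n_00} with i ∈ U_k one has U_k ∩ (I \ {i}) ≠ ∅. Then f_free(I) + Σ_{k=1}^{n_00} f_k(I) = f_free(I \ {i}) + Σ_{k=1}^{n_00} f_k(I \ {i}) + n_ii (where for the empty set f_free(∅) = 0 and f_k(∅) = 1, so the value for ∅ is n_00). Consequently, if a point r ∈ C̄ satisfies the sum-rate constraint on I with equality, then it satisfies the sum-rate constraint on I \ {i} with equality and moreover r_i = n_ii. -/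
open Finset

/-- Occlusion lemma.  If `i ∈ I` is occluded by `I` — every level at which `i` interferes is
also occupied by another user of `I` — then the sum-rate bound satisfies
`f(I) = f(I \ {i}) + n_{ii}`; consequently any `r ∈ C̄` meeting the sum-rate constraint on `I`
with equality also meets the one on `I \ {i}` with equality, and `r_i = n_{ii}`. -/
theorem occlusion (K : ℕ) (hK : 1 ≤ K) (nd nc : Fin (K + 1) → ℕ)
    (hreg : ∀ i : Fin (K + 1), i ≠ 0 → nc i ≤ nd 0 + nd i)
    (I : Finset (Fin (K + 1))) (hI0 : 0 ∉ I) (hIne : I.Nonempty)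
    (i : Fin (K + 1)) (hi : i ∈ I)
    (hocc : ∀ k ∈ Finset.Icc 1 (nd 0), i ∈ Uset K nd nc k →
      (Uset K nd nc k ∩ I.erase i).Nonempty) :
    sumBound K nd nc I = sumBound K nd nc (I.erase i) + nd i ∧
    ∀ r ∈ outerRegion K nd nc,
      r 0 + ∑ j ∈ I, r j = (sumBound K nd nc I : ℝ) →
      (r 0 + ∑ j ∈ I.erase i, r j = (sumBound K nd nc (I.erase i) : ℝ) ∧
        r i = (nd i : ℝ)) := by
  have hi0 : i ≠ 0 := fun h => hI0 (h ▸ hi)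
  have hcount : ∑ k ∈ Finset.Icc 1 (nd 0), (if i ∈ Uset K nd nc k then 1 else 0)
      = min (nc i) (nd 0) - (nc i - nd i) := by
    rw [← Finset.card_filter]
    have : (Finset.Icc 1 (nd 0)).filter (fun k => i ∈ Uset K nd nc k)
        = Finset.Icc (nc i - nd i + 1) (min (nc i) (nd 0)) := by
      ext k
      simp only [Uset, Finset.mem_filter, Finset.mem_Icc, Finset.mem_univ, true_and, ne_eq, hi0,
        not_false_eq_true]
      omega
    rw [this, Nat.card_Icc]
    omega
  have hlev : ∀ k ∈ Finset.Icc 1 (nd 0), max ((Uset K nd nc k ∩ I).card) 1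
      = max ((Uset K nd nc k ∩ I.erase i).card) 1 + (if i ∈ Uset K nd nc k then 1 else 0) := by
    intro k hk
    rw [Finset.inter_erase]
    by_cases hU : i ∈ Uset K nd nc k
    · have h1 := (hocc k hk hU).card_pos
      rw [Finset.inter_erase] at h1
      have h2 := Finset.card_erase_add_one (Finset.mem_inter.2 ⟨hU, hi⟩)
      rw [if_pos hU]
      omega
    · rw [if_neg hU, Finset.erase_eq_of_notMem (fun h => hU (Finset.mem_inter.1 h).1), add_zero]
  have hmain : sumBound K nd nc I = sumBound K nd nc (I.erase i) + nd i := by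
    unfold sumBound
    rw [Finset.sum_congr rfl hlev, Finset.sum_add_distrib, hcount,
      ← Finset.sum_erase_add I _ hi]
    have := hreg i hi0
    have hf : ffree K nd nc i + (min (nc i) (nd 0) - (nc i - nd i)) = nd i := by
      unfold ffree
      omega
    omega
  refine ⟨hmain, ?_⟩
  rintro r ⟨hbox, hsum⟩ heq
  rw [← Finset.sum_erase_add I _ hi, hmain] at heq
  push_cast at heq
  have hle : r 0 + ∑ j ∈ I.erase i, r j ≤ (sumBound K nd nc (I.erase i) : ℝ) := by
    rcases (I.erase i).eq_empty_or_nonempty with h | h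
    · rw [h]
      simpa [sumBound] using (hbox 0).2
    · exact hsum _ (fun h0 => hI0 (Finset.mem_of_mem_erase h0)) h
  have := (hbox i).2
  constructor <;> linarith
end

section
/- Reciprocity of interference sets. Let K ≥ 1 and let n_00, n_11, …, n_KK and n_10, …, n_K0 be nonnegative integers. For each integer k define U_k^OTM = {i ∈ {1,…,K} : n_00 − n_i0 < k ≤ n_ii − n_i0 + n_00} (the users experiencing interference from level k of transmitter 0 in the one-to-many channel) and Ũ_k = {i ∈ {1,…,K} : n_i0 − n_ii < k ≤ n_i0} (the users causing interference on level k of receiver 0 in the reciprocal many-to-one channel with cross gains ñ_0i = n_i0). Then Ũ_k = U^OTM_{1 + n_00 − k} for every integer k; in particular, for every S ⊆ {1,…,K}, Σ_{k=1}^{n_00} |Ũ_k ∩ S| = Σ_{k=1}^{n_00} |U_k^OTM ∩ S| and Σ_{k=1}^{n_00} max(|Ũ_k ∩ S|, 1) = Σ_{k=1}^{n_00} max(|U_k^OTM ∩ S|, 1). -/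
open Finset

/-- In the one-to-many channel (direct gains `nd i = n_{ii}`, cross gains `g i = n_{i0}`),
the set of users experiencing interference from level `k` of transmitter 0:
`n_{00} − n_{i0} < k ≤ n_{ii} − n_{i0} + n_{00}`. -/
def UOTM (K n00 : ℕ) (nd g : ℕ → ℕ) (k : ℤ) : Finset ℕ :=
  (Finset.Icc 1 K).filter fun i =>
    (n00 : ℤ) - (g i : ℤ) < k ∧ k ≤ (nd i : ℤ) - (g i : ℤ) + (n00 : ℤ)

/-- In the reciprocal many-to-one channel (cross gains `ñ_{0i} = n_{i0} = g i`), the set of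
users causing interference on level `k` of receiver 0: `n_{i0} − n_{ii} < k ≤ n_{i0}`. -/
def Utilde (K : ℕ) (nd g : ℕ → ℕ) (k : ℤ) : Finset ℕ :=
  (Finset.Icc 1 K).filter fun i => (g i : ℤ) - (nd i : ℤ) < k ∧ k ≤ (g i : ℤ)

/-- Reciprocity of interference sets: `Ũ_k = U^OTM_{1 + n00 − k}` for every integer `k`;
in particular the level-wise interference counts of the one-to-many channel and of its
reciprocal many-to-one channel agree for every subset `S ⊆ {1,…,K}`. -/
theorem reciprocity_of_interference_sets (K : ℕ) (hK : 1 ≤ K) (n00 : ℕ) (nd g : ℕ → ℕ) :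
    (∀ k : ℤ, Utilde K nd g k = UOTM K n00 nd g (1 + (n00 : ℤ) - k)) ∧
    (∀ S ⊆ Finset.Icc 1 K,
      (∑ k ∈ Finset.Icc (1 : ℤ) (n00 : ℤ), (Utilde K nd g k ∩ S).card =
        ∑ k ∈ Finset.Icc (1 : ℤ) (n00 : ℤ), (UOTM K n00 nd g k ∩ S).card) ∧
      (∑ k ∈ Finset.Icc (1 : ℤ) (n00 : ℤ), max (Utilde K nd g k ∩ S).card 1 =
        ∑ k ∈ Finset.Icc (1 : ℤ) (n00 : ℤ), max (UOTM K n00 nd g k ∩ S).card 1)) := by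
  have h1 : ∀ k : ℤ, Utilde K nd g k = UOTM K n00 nd g (1 + (n00 : ℤ) - k) := by
    intro k
    unfold Utilde UOTM
    apply Finset.filter_congr
    intro i _
    constructor <;> rintro ⟨h, h'⟩ <;> constructor <;> omega
  have h2 : ∀ f : ℤ → ℕ, ∑ k ∈ Finset.Icc (1 : ℤ) (n00 : ℤ), f (1 + (n00 : ℤ) - k) =
      ∑ k ∈ Finset.Icc (1 : ℤ) (n00 : ℤ), f k := by
    intro f
    refine Finset.sum_bij' (fun k _ => 1 + (n00 : ℤ) - k) (fun k _ => 1 + (n00 : ℤ) - k)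
      ?_ ?_ ?_ ?_ ?_
    · intro k hk
      rw [Finset.mem_Icc] at hk ⊢
      omega
    · intro k hk
      rw [Finset.mem_Icc] at hk ⊢
      omega
    · intro k _
      omega
    · intro k _
      omega
    · intro k _
      rfl
  refine ⟨h1, fun S _ => ⟨?_, ?_⟩⟩
  · simp only [h1]
    exact h2 fun k => (UOTM K n00 nd g k ∩ S).card
  · simp only [h1]
    exact h2 fun k => max (UOTM K n00 nd g k ∩ S).card 1
end

section
/- Gaussian-to-deterministic comparison identity for the many-to-one outer bound. Let m ≥ 1 and let n_00 ≥ 1 and, for 1 ≤ i ≤ m, n_ii ≥ 0 and n_0i ≥ 1 be integers satisfying: n_0i − n_ii ≤ n_{0,i+1} − n_{i+1,i+1} and n_0i < n_{0,i+1} for 1 ≤ i ≤ m−1, and n_0m − n_mm ≤ n_00. Let U_k = {i ∈ {1,…,m} : n_0i − n_ii < k ≤ n_0i} and S = {1,…,m}. Then Σ_{i=1}^{m} (n_ii − n_0i)⁺ + Σ_{i=1}^{m−1} (n_0i − (n_{0,i+1} − n_{i+1,i+1})⁺)⁺ + max(n_0m, n_00) = n_00 + Σ_{i=1}^{m} [(n_0i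 − n_00)⁺ + (n_ii − n_0i)⁺] + Σ_{k=1}^{n_00} (|U_k ∩ S| − 1)⁺, where x⁺ = max(x,0). -/
open Finset

theorem card_aux (a b : ℕ → ℤ) (k : ℤ) (m : ℕ)
    (ha : ∀ i ∈ Finset.Icc 1 m, a i ≤ a (i + 1))
    (hb : ∀ i ∈ Finset.Icc 1 m, b i < b (i + 1)) :
    (((Finset.Icc 1 (m + 1)).filter (fun i : ℕ => a i < k ∧ k ≤ b i)).card - 1 : ℕ)
      = ∑ i ∈ Finset.Icc 1 m, (if a (i + 1) < k ∧ k ≤ b i then 1 else 0) := by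
  induction m with
  | zero =>
    have h := Finset.card_filter_le (Finset.Icc 1 (0 + 1)) (fun i : ℕ => a i < k ∧ k ≤ b i)
    simp only [Nat.card_Icc] at h
    simp
    simp at h
    omega
  | succ m ih =>
    have ih := ih (fun i hi => ha i (by simp at hi ⊢; omega))
      (fun i hi => hb i (by simp at hi ⊢; omega))
    have ham := ha (m + 1) (by simp)
    have hbm := hb (m + 1) (by simp)
    have hmono : ∀ j, ∀ d, 1 ≤ j → j + d ≤ m + 1 → b j ≤ b (j + d) := by
      intro j d hj
      induction d with
      | zero => intro _; exact le_rfl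
      | succ d ihd =>
        intro h
        have h1 := ihd (by omega)
        have h2 := hb (j + d) (by simp; omega)
        have h3 : j + (d + 1) = j + d + 1 := by omega
        rw [h3]
        omega
    rw [Finset.sum_Icc_succ_top (by omega), ← ih,
      ← Finset.insert_Icc_right_eq_Icc_add_one (show 1 ≤ m + 1 + 1 by omega), Finset.filter_insert]
    by_cases hU : a (m + 1 + 1) < k ∧ k ≤ b (m + 1 + 1)
    · rw [if_pos hU, Finset.card_insert_of_notMem (by simp)]
      by_cases hI : k ≤ b (m + 1)
      · have : 0 < ((Finset.Icc 1 (m + 1)).filter (fun i : ℕ => a i < k ∧ k ≤ b i)).card :=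
          Finset.card_pos.mpr ⟨m + 1, by simp; omega⟩
        rw [if_pos ⟨hU.1, hI⟩]
        omega
      · have : ((Finset.Icc 1 (m + 1)).filter (fun i : ℕ => a i < k ∧ k ≤ b i)) = ∅ := by
          apply Finset.filter_eq_empty_iff.mpr
          intro j hj h
          simp at hj
          have h1 := hmono j (m + 1 - j) hj.1 (by omega)
          rw [show j + (m + 1 - j) = m + 1 by omega] at h1
          omega
        rw [this, if_neg (fun h => hI h.2)]
        simp
    · rw [if_neg hU, if_neg (by omega)]
      simp

theorem sum_aux (x y : ℤ) (n : ℕ) (hx : x ≤ n) :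
    max (y - max x 0) 0 = max (y - n) 0
      + ∑ k ∈ Finset.Icc 1 n, (if x < (k : ℤ) ∧ (k : ℤ) ≤ y then (1 : ℤ) else 0) := by
  have key : ∀ N : ℕ, ∑ k ∈ Finset.Icc 1 N, (if x < (k : ℤ) ∧ (k : ℤ) ≤ y then (1 : ℤ) else 0)
      = max (min y N - max x 0) 0 := by
    intro N
    induction N with
    | zero => simp
    | succ N ih =>
      rw [Finset.sum_Icc_succ_top (by omega), ih]
      push_cast
      split_ifs <;> omega
  rw [key]
  omega

/-- Gaussian-to-deterministic comparison identity for the many-to-one outer bound.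
With `nd i = n_{ii}` (direct gains), `nc i = n_{0i}` (cross gains, `nc 0 = n_{00}` is
written `n00`), `U_k = {i ∈ {1,…,m} : n_{0i} − n_{ii} < k ≤ n_{0i}}` and `S = {1,…,m}`,
the Gaussian sum-rate expression equals the deterministic one. -/
theorem gaussian_deterministic_comparison (m : ℕ) (hm : 1 ≤ m)
    (n00 : ℕ) (hn00 : 1 ≤ n00) (nd nc : ℕ → ℕ)
    (hnc : ∀ i ∈ Finset.Icc 1 m, 1 ≤ nc i)
    (hord1 : ∀ i ∈ Finset.Icc 1 (m - 1),
      (nc i : ℤ) - (nd i : ℤ) ≤ (nc (i + 1) : ℤ) - (nd (i + 1) : ℤ))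
    (hord2 : ∀ i ∈ Finset.Icc 1 (m - 1), nc i < nc (i + 1))
    (hlast : (nc m : ℤ) - (nd m : ℤ) ≤ (n00 : ℤ)) :
    (∑ i ∈ Finset.Icc 1 m, max ((nd i : ℤ) - (nc i : ℤ)) 0)
      + (∑ i ∈ Finset.Icc 1 (m - 1),
          max ((nc i : ℤ) - max ((nc (i + 1) : ℤ) - (nd (i + 1) : ℤ)) 0) 0)
      + max (nc m : ℤ) (n00 : ℤ)
    = (n00 : ℤ)
      + (∑ i ∈ Finset.Icc 1 m,
          (max ((nc i : ℤ) - (n00 : ℤ)) 0 + max ((nd i : ℤ) - (nc i : ℤ)) 0))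
      + ∑ k ∈ Finset.Icc 1 n00,
          (((((Finset.Icc 1 m).filter
            (fun i : ℕ => (nc i : ℤ) - (nd i : ℤ) < (k : ℤ) ∧ (k : ℤ) ≤ (nc i : ℤ))).card
            - 1 : ℕ) : ℤ)) := by
  obtain ⟨M, rfl⟩ : ∃ M, m = M + 1 := ⟨m - 1, by omega⟩
  simp only [Nat.add_sub_cancel] at *
  have hle : ∀ d, ∀ i, 1 ≤ i → i + d = M + 1 → (nc i : ℤ) - nd i ≤ n00 := by
    intro d
    induction d with
    | zero => intro i _ h; rw [show i = M + 1 by omega]; exact hlast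
    | succ d ih =>
      intro i hi h
      exact (hord1 i (by simp; omega)).trans (ih (i + 1) (by omega) (by omega))
  have hR : ∀ k ∈ Finset.Icc 1 n00, (((((Finset.Icc 1 (M + 1)).filter
      (fun i : ℕ => (nc i : ℤ) - (nd i : ℤ) < (k : ℤ) ∧ (k : ℤ) ≤ (nc i : ℤ))).card
            - 1 : ℕ) : ℤ)) = ∑ i ∈ Finset.Icc 1 M,
        (if (nc (i + 1) : ℤ) - nd (i + 1) < (k : ℤ) ∧ (k : ℤ) ≤ nc i then (1 : ℤ) else 0) := by
    intro k _
    rw [card_aux (fun i => (nc i : ℤ) - nd i) (fun i => (nc i : ℤ)) k M hord1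
      (fun i hi => by exact_mod_cast hord2 i hi)]
    push_cast
    rfl
  rw [Finset.sum_congr rfl hR, Finset.sum_comm,
    Finset.sum_congr rfl (fun i hi => sum_aux ((nc (i + 1) : ℤ) - nd (i + 1)) (nc i) n00
      (hle (M - i) (i + 1) (by omega) (by simp at hi; omega))),
    Finset.sum_add_distrib, Finset.sum_add_distrib,
    Finset.sum_Icc_succ_top (show 1 ≤ M + 1 by omega) (fun i => max ((nc i : ℤ) - n00) 0)]
  have : max (nc (M + 1) : ℤ) n00 = n00 + max ((nc (M + 1) : ℤ) - n00) 0 := by omega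
  rw [this]
  ring
end

section
/- Let m ≥ 1 and let S_1,…,S_m and I_1,…,I_m be positive reals with I_i/S_i ≤ I_{i+1}/S_{i+1} for 1 ≤ i ≤ m−1. For 1 ≤ k ≤ m set T_k = (S_k/I_k) · Σ_{i=2}^{k} max(I_i/S_i, 1) (so T_1 = 0). Then, with log denoting the base-2 logarithm and x⁺ = max(x,0), Σ_{k=1}^{m} log(1 + S_k·T_k/(S_k + T_k)) ≤ −m + (m+1)·log(m+1) + Σ_{k=1}^{m} (log(S_k/I_k))⁺, where for k = 1 the summand on the left is interpreted as log(1 + 0) = 0. -/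
open Finset

/-- The effective interference-to-signal term
`T_k = (S_k / I_k) · ∑_{i=2}^{k} max(I_i / S_i, 1)` (so `T_1 = 0`). -/
noncomputable def Tterm (S I : ℕ → ℝ) (k : ℕ) : ℝ :=
  (S k / I k) * ∑ i ∈ Finset.Icc 2 k, max (I i / S i) 1

lemma fact_bound (m : ℕ) : (m.factorial : ℝ) * 2 ^ m ≤ ((m : ℝ) + 1) ^ m := by
  induction m with
  | zero => simp
  | succ n ih =>
    have hb : 2 * ((n : ℝ) + 1) ^ (n + 1) ≤ ((n : ℝ) + 1 + 1) ^ (n + 1) := by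
      have hp : (0 : ℝ) < (n : ℝ) + 1 := by positivity
      have h := one_add_mul_le_pow (a := 1 / ((n : ℝ) + 1))
        (by have : 0 < 1 / ((n : ℝ) + 1) := by positivity
            linarith) (n + 1)
      have e : 1 + ((n + 1 : ℕ) : ℝ) * (1 / ((n : ℝ) + 1)) = 2 := by
        push_cast; field_simp; norm_num
      rw [e] at h
      have e2 : ((n : ℝ) + 1 + 1) = (1 + 1 / ((n : ℝ) + 1)) * ((n : ℝ) + 1) := by
        field_simp
      rw [e2, mul_pow]
      gcongr
    rw [Nat.factorial_succ]
    push_cast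
    calc ((n : ℝ) + 1) * n.factorial * 2 ^ (n + 1)
        = 2 * (((n : ℝ) + 1) * (n.factorial * 2 ^ n)) := by ring
      _ ≤ 2 * (((n : ℝ) + 1) * ((n : ℝ) + 1) ^ n) := by gcongr
      _ = 2 * ((n : ℝ) + 1) ^ (n + 1) := by ring
      _ ≤ _ := hb

lemma sum_logb_fact (m : ℕ) :
    ∑ k ∈ Finset.Icc 1 m, Real.logb 2 (k : ℝ) = Real.logb 2 (m.factorial : ℝ) := by
  induction m with
  | zero => simp
  | succ n ih =>
    rw [Finset.sum_Icc_succ_top (by omega), ih, Nat.factorial_succ, Nat.cast_mul,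
      Real.logb_mul (by positivity) (by positivity), add_comm]

lemma sum_logb_le (m : ℕ) :
    ∑ k ∈ Finset.Icc 1 m, Real.logb 2 (k : ℝ)
      ≤ -(m : ℝ) + ((m : ℝ) + 1) * Real.logb 2 ((m : ℝ) + 1) := by
  rw [sum_logb_fact]
  have h := Real.logb_le_logb_of_le (b := 2) (by norm_num) (by positivity) (fact_bound m)
  rw [Real.logb_mul (by positivity) (by positivity), Real.logb_pow, Real.logb_pow,
    Real.logb_self_eq_one (by norm_num)] at h
  have h0 : 0 ≤ Real.logb 2 ((m : ℝ) + 1) :=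
    Real.logb_nonneg (by norm_num) (by linarith [(Nat.cast_nonneg m : (0 : ℝ) ≤ m)])
  linarith

/-- Key estimate simplifying the Gaussian many-to-one sum-rate outer bound:
`∑_{k=1}^m log(1 + S_k T_k/(S_k + T_k)) ≤ −m + (m+1) log(m+1) + ∑_{k=1}^m (log(S_k/I_k))⁺`
(log base 2). -/
theorem sum_log_harmonic_bound (m : ℕ) (hm : 1 ≤ m) (S I : ℕ → ℝ)
    (hS : ∀ i ∈ Finset.Icc 1 m, 0 < S i)
    (hI : ∀ i ∈ Finset.Icc 1 m, 0 < I i)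
    (hord : ∀ i ∈ Finset.Icc 1 (m - 1), I i / S i ≤ I (i + 1) / S (i + 1)) :
    ∑ k ∈ Finset.Icc 1 m,
        Real.logb 2 (1 + S k * Tterm S I k / (S k + Tterm S I k))
      ≤ -(m : ℝ) + ((m : ℝ) + 1) * Real.logb 2 ((m : ℝ) + 1)
        + ∑ k ∈ Finset.Icc 1 m, max (Real.logb 2 (S k / I k)) 0 := by
  have hmono : ∀ i k, 1 ≤ i → i ≤ k → k ≤ m → I i / S i ≤ I k / S k := by
    intro i k hi hik
    induction k, hik using Nat.le_induction with
    | base => intro _; exact le_rfl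
    | succ n hn ih =>
      intro h
      exact (ih (by omega)).trans (hord n (Finset.mem_Icc.2 ⟨by omega, by omega⟩))
  refine le_trans ?_ (add_le_add_left (sum_logb_le m) _)
  rw [← Finset.sum_add_distrib]
  refine Finset.sum_le_sum fun k hk => ?_
  have hSk := hS k hk
  have hIk := hI k hk
  obtain ⟨h1, h2⟩ := Finset.mem_Icc.1 hk
  have hk1 : (1 : ℝ) ≤ k := by exact_mod_cast h1
  have hr : 0 < S k / I k := by positivity
  have hT0 : 0 ≤ Tterm S I k := by
    unfold Tterm
    exact mul_nonneg hr.le (Finset.sum_nonneg fun i _ => le_max_of_le_right zero_le_one)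
  have hsum : ∑ i ∈ Finset.Icc 2 k, max (I i / S i) 1 ≤ ((k : ℝ) - 1) * max (I k / S k) 1 := by
    have h := Finset.sum_le_card_nsmul (Finset.Icc 2 k) (fun i => max (I i / S i) 1)
      (max (I k / S k) 1) (fun i hi => by
        obtain ⟨h3, h4⟩ := Finset.mem_Icc.1 hi
        exact max_le_max (hmono i k (by omega) h4 h2) le_rfl)
    rw [Nat.card_Icc, nsmul_eq_mul] at h
    have e : ((k + 1 - 2 : ℕ) : ℝ) = (k : ℝ) - 1 := by
      rw [show k + 1 - 2 = k - 1 by omega, Nat.cast_sub h1]; simp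
    rwa [e] at h
  have hT : Tterm S I k ≤ ((k : ℝ) - 1) * max (S k / I k) 1 := by
    unfold Tterm
    calc _ ≤ S k / I k * (((k : ℝ) - 1) * max (I k / S k) 1) := by gcongr
      _ = ((k : ℝ) - 1) * (S k / I k * max (I k / S k) 1) := by ring
      _ = ((k : ℝ) - 1) * max (S k / I k) 1 := by
        rw [mul_max_of_nonneg _ _ hr.le, mul_one, max_comm]
        congr 2
        field_simp
  have hH : S k * Tterm S I k / (S k + Tterm S I k) ≤ Tterm S I k := by
    rw [div_le_iff₀ (by positivity)]
    nlinarith [mul_nonneg hT0 hT0]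
  have hH0 : 0 ≤ S k * Tterm S I k / (S k + Tterm S I k) := by positivity
  have hM : 1 ≤ max (S k / I k) 1 := le_max_right _ _
  have hle : 1 + S k * Tterm S I k / (S k + Tterm S I k) ≤ k * max (S k / I k) 1 := by
    nlinarith
  have h := Real.logb_le_logb_of_le (b := 2) (by norm_num) (by linarith) hle
  rw [Real.logb_mul (by linarith) (by linarith)] at h
  refine h.trans (add_le_add le_rfl ?_)
  rcases max_choice (S k / I k) 1 with e | e <;> rw [e]
  · exact le_max_left _ _
  · simp
end

section
/- Suboptimality of Gaussian Han–Kobayashi rate splitting: MAC verification at receiver 0. Let β ≥ 2 be real and S_1, S_2 ∈ [0,1]. Set the four power fractions P_{1a} = S_1, P_{1b} = 1 − S_1, P_{2a} = S_2, P_{2b} = 1 − S_2. Let r_{1a}, r_{1b}, r_{2a}, r_{2b} be nonnegative reals satisfying, for i = 1, 2: r_{ia} ≤ log(1 + β·S_i), r_{ib} ≤ log(1 + β·(1 − S_i)), and r_{ia} + r_{ib} ≤ log(1 + β) (log base 2). Then for every nonempty subset T ⊆ {1a, 1b, 2a, 2b}: Σ_{t∈T} r_t ≤ log(1 + β²·Σ_{t∈T}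 P_t). In particular r_{1a} + r_{1b} + r_{2a} + r_{2b} ≤ log(1 + 2β²). -/
open Finset

theorem HK_pair (β x y a b : ℝ) (hβ : 2 ≤ β) (hx0 : 0 ≤ x) (hx1 : x ≤ 1)
    (hy0 : 0 ≤ y) (hy1 : y ≤ 1) (ha : a ≤ Real.logb 2 (1 + β * x))
    (hb : b ≤ Real.logb 2 (1 + β * y)) :
    a + b ≤ Real.logb 2 (1 + β ^ 2 * (x + y)) := by
  have hx : 0 < 1 + β * x := by positivity
  have hy : 0 < 1 + β * y := by positivity
  have h : a + b ≤ Real.logb 2 ((1 + β * x) * (1 + β * y)) := by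
    rw [Real.logb_mul hx.ne' hy.ne']; linarith
  refine h.trans (Real.logb_le_logb_of_le (by norm_num) (by positivity) ?_)
  have h1 : x * y ≤ (x + y) / 2 := by nlinarith
  have h2 : β ^ 2 * (x * y) ≤ β ^ 2 * ((x + y) / 2) := by gcongr
  have h3 : 0 ≤ (β * (β - 2)) * (x + y) := by
    have : 0 ≤ β - 2 := by linarith
    positivity
  nlinarith

theorem HK_user (β S a b : ℝ) (p q : Prop) [Decidable p] [Decidable q]
    (hS : S ∈ Set.Icc (0 : ℝ) 1)
    (h1a : a ≤ Real.logb 2 (1 + β * S))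
    (h1b : b ≤ Real.logb 2 (1 + β * (1 - S)))
    (h1 : a + b ≤ Real.logb 2 (1 + β)) :
    0 ≤ (if p then S else 0) + (if q then 1 - S else 0) ∧
    (if p then S else 0) + (if q then 1 - S else 0) ≤ 1 ∧
    (if p then a else 0) + (if q then b else 0) ≤
      Real.logb 2 (1 + β * ((if p then S else 0) + (if q then 1 - S else 0))) := by
  obtain ⟨h0, h1'⟩ := hS
  by_cases hp : p <;> by_cases hq : q <;> simp [hp, hq] <;> (try refine ⟨?_, ?_⟩) <;> (try refine ⟨?_, ?_⟩) <;>
    first | assumption | linarith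

/-- Suboptimality of Gaussian Han–Kobayashi rate splitting: MAC verification at receiver 0.
The four split rates `r 0 = r_{1a}, r 1 = r_{1b}, r 2 = r_{2a}, r 3 = r_{2b}` with power
fractions `P = (S₁, 1−S₁, S₂, 1−S₂)` satisfying the two-user MAC constraints with gain `β`
at receivers 1 and 2 lie inside every MAC constraint with gain `β²` at receiver 0; in
particular the total sum rate is at most `log(1 + 2β²)` (log base 2). -/
theorem gaussian_HK_MAC_verification (β S1 S2 : ℝ) (hβ : 2 ≤ β)
    (hS1 : S1 ∈ Set.Icc (0 : ℝ) 1) (hS2 : S2 ∈ Set.Icc (0 : ℝ) 1)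
    (r P : Fin 4 → ℝ)
    (hP : P = ![S1, 1 - S1, S2, 1 - S2])
    (hr : ∀ t, 0 ≤ r t)
    (h1a : r 0 ≤ Real.logb 2 (1 + β * S1))
    (h1b : r 1 ≤ Real.logb 2 (1 + β * (1 - S1)))
    (h1 : r 0 + r 1 ≤ Real.logb 2 (1 + β))
    (h2a : r 2 ≤ Real.logb 2 (1 + β * S2))
    (h2b : r 3 ≤ Real.logb 2 (1 + β * (1 - S2)))
    (h2 : r 2 + r 3 ≤ Real.logb 2 (1 + β)) :
    (∀ T : Finset (Fin 4), T.Nonempty →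
        ∑ t ∈ T, r t ≤ Real.logb 2 (1 + β ^ 2 * ∑ t ∈ T, P t)) ∧
    r 0 + r 1 + r 2 + r 3 ≤ Real.logb 2 (1 + 2 * β ^ 2) := by
  have key : ∀ T : Finset (Fin 4),
      ∑ t ∈ T, r t ≤ Real.logb 2 (1 + β ^ 2 * ∑ t ∈ T, P t) := by
    intro T
    obtain ⟨a0, a1, a2⟩ := HK_user β S1 (r 0) (r 1) (0 ∈ T) (1 ∈ T) hS1 h1a h1b h1
    obtain ⟨b0, b1, b2⟩ := HK_user β S2 (r 2) (r 3) (2 ∈ T) (3 ∈ T) hS2 h2a h2b h2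
    have h := HK_pair β _ _ _ _ hβ a0 a1 b0 b1 a2 b2
    have e : ∀ f : Fin 4 → ℝ, ∑ t ∈ T, f t =
        ((if 0 ∈ T then f 0 else 0) + (if 1 ∈ T then f 1 else 0)) +
        ((if 2 ∈ T then f 2 else 0) + (if 3 ∈ T then f 3 else 0)) := by
      intro f
      have : ∑ t ∈ T, f t = ∑ t, if t ∈ T then f t else 0 := by simp
      rw [this, Fin.sum_univ_four]; ring
    rw [e r, e P, hP]
    exact h
  refine ⟨fun T _ => key T, ?_⟩
  have h := key Finset.univ
  rw [Fin.sum_univ_four, Fin.sum_univ_four, hP] at h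
  have e : 1 + β ^ 2 * (S1 + (1 - S1) + S2 + (1 - S2)) = 1 + 2 * β ^ 2 := by ring
  rw [← e]
  exact h
end

section
/- One-to-many Gaussian outer bound versus deterministic region. Let m ≥ 1, let SNR_0, SNR_1, …, SNR_m be positive reals, and let INR_1, …, INR_m be reals with 1 ≤ INR_1 < INR_2 < … < INR_m. Then, with log the base-2 logarithm and x⁺ = max(x,0): log(1 + SNR_0/(1 + INR_m)) + log(1 + SNR_1 + INR_1) + Σ_{i=2}^{m} log(1 + SNR_i + INR_i/(1 + INR_{i−1})) ≤ 2(m+1) + (log SNR_0 − log INR_m)⁺ + max(log SNR_1, log INR_1) + Σ_{i=2}^{m} max(log SNR_i, log INR_i − log INR_{i−1}). That is, the genie-aided sum-rate outer bound for the one-to-many Gaussian interference channel is at most the corresponding deterministic-channel sum-rate expression (with n_ii = log SNR_i and n_i0 = log INR_i) plus an additive gap of at most 2(m+1) bits. -/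
open Finset

theorem aux_logb_le (x a b : ℝ) (hx : 0 < x) (ha : 0 < a) (hb : 0 < b)
    (h : x ≤ 4 * max a b) :
    Real.logb 2 x ≤ 2 + max (Real.logb 2 a) (Real.logb 2 b) := by
  have key : ∀ c : ℝ, 0 < c → x ≤ 4 * c → Real.logb 2 x ≤ 2 + Real.logb 2 c := by
    intro c hc hxc
    have h4 : Real.logb 2 4 = 2 := by
      rw [show (4 : ℝ) = 2 ^ (2 : ℝ) by norm_num]
      exact Real.logb_rpow (by norm_num) (by norm_num)
    calc Real.logb 2 x ≤ Real.logb 2 (4 * c) :=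
          Real.logb_le_logb_of_le (by norm_num) hx hxc
      _ = 2 + Real.logb 2 c := by
          rw [Real.logb_mul (by norm_num) hc.ne', h4]
  rcases le_total a b with hab | hab
  · rw [max_eq_right hab] at h
    exact (key b hb h).trans (by gcongr; exact le_max_right _ _)
  · rw [max_eq_left hab] at h
    exact (key a ha h).trans (by gcongr; exact le_max_left _ _)

/-- One-to-many Gaussian outer bound versus deterministic region: the genie-aided sum-rate
outer bound for the one-to-many Gaussian interference channel is at most the corresponding
deterministic-channel sum-rate expression (with `n_{ii} = log SNR_i`, `n_{i0} = log INR_i`)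
plus an additive gap of at most `2(m+1)` bits (log base 2). -/
theorem one_to_many_outer_vs_deterministic (m : ℕ) (hm : 1 ≤ m) (SNR INR : ℕ → ℝ)
    (hSNR : ∀ i ≤ m, 0 < SNR i)
    (hINR1 : 1 ≤ INR 1)
    (hINRmono : ∀ i ∈ Finset.Icc 1 (m - 1), INR i < INR (i + 1)) :
    Real.logb 2 (1 + SNR 0 / (1 + INR m)) + Real.logb 2 (1 + SNR 1 + INR 1)
        + ∑ i ∈ Finset.Icc 2 m, Real.logb 2 (1 + SNR i + INR i / (1 + INR (i - 1)))
      ≤ 2 * ((m : ℝ) + 1)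
        + max (Real.logb 2 (SNR 0) - Real.logb 2 (INR m)) 0
        + max (Real.logb 2 (SNR 1)) (Real.logb 2 (INR 1))
        + ∑ i ∈ Finset.Icc 2 m,
            max (Real.logb 2 (SNR i)) (Real.logb 2 (INR i) - Real.logb 2 (INR (i - 1))) := by
  have hI : ∀ i, 1 ≤ i → i ≤ m → 1 ≤ INR i := by
    intro i hi
    induction i, hi using Nat.le_induction with
    | base => intro _; exact hINR1
    | succ k hk ih =>
      intro hkm
      have h1 := ih (by omega)
      have h2 := hINRmono k (Finset.mem_Icc.mpr ⟨hk, by omega⟩)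
      linarith
  have hIm := hI m hm le_rfl
  have hS0 := hSNR 0 (Nat.zero_le _)
  have hS1 := hSNR 1 hm
  have t0 : Real.logb 2 (1 + SNR 0 / (1 + INR m))
      ≤ 2 + max (Real.logb 2 (SNR 0) - Real.logb 2 (INR m)) 0 := by
    have h1 : SNR 0 / (1 + INR m) ≤ SNR 0 / INR m := by
      gcongr
      linarith
    have := aux_logb_le (1 + SNR 0 / (1 + INR m)) (SNR 0 / INR m) 1 (by positivity)
      (by positivity) one_pos (by
        have := le_max_left (SNR 0 / INR m) 1
        have := le_max_right (SNR 0 / INR m) 1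
        linarith)
    rwa [Real.logb_div hS0.ne' (by positivity), Real.logb_one] at this
  have t1 : Real.logb 2 (1 + SNR 1 + INR 1)
      ≤ 2 + max (Real.logb 2 (SNR 1)) (Real.logb 2 (INR 1)) := by
    refine aux_logb_le _ _ _ (by positivity) hS1 (by positivity) ?_
    have := le_max_left (SNR 1) (INR 1)
    have := le_max_right (SNR 1) (INR 1)
    linarith
  have ts : ∑ i ∈ Finset.Icc 2 m, Real.logb 2 (1 + SNR i + INR i / (1 + INR (i - 1)))
      ≤ ∑ i ∈ Finset.Icc 2 m, (2 +
        max (Real.logb 2 (SNR i)) (Real.logb 2 (INR i) - Real.logb 2 (INR (i - 1)))) := by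
    refine Finset.sum_le_sum fun i hi => ?_
    obtain ⟨hi2, him⟩ := Finset.mem_Icc.mp hi
    have hS := hSNR i him
    have hA := hI i (by omega) him
    have hB := hI (i - 1) (by omega) (by omega)
    have hlt := hINRmono (i - 1) (Finset.mem_Icc.mpr ⟨by omega, by omega⟩)
    rw [show i - 1 + 1 = i by omega] at hlt
    rw [← Real.logb_div (by positivity) (by positivity)]
    refine aux_logb_le _ _ _ (by positivity) hS (by positivity) ?_
    have h1 : INR i / (1 + INR (i - 1)) ≤ INR i / INR (i - 1) := by
      gcongr
      linarith
    have h2 : 1 ≤ INR i / INR (i - 1) := by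
      rw [le_div_iff₀ (by positivity)]
      linarith
    have := le_max_left (SNR i) (INR i / INR (i - 1))
    have := le_max_right (SNR i) (INR i / INR (i - 1))
    linarith
  rw [Finset.sum_add_distrib, Finset.sum_const, Nat.card_Icc, nsmul_eq_mul,
    show m + 1 - 2 = m - 1 by omega, Nat.cast_sub hm, Nat.cast_one] at ts
  linarith
end
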